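/- arXiv:2510.25200 — 3 statements merged into one kernel-verified Lean document; each statement's English description precedes it below -/
import Mathlib

section
/- Let X be a nonempty set, ⊕ a continuous t-conorm, and w a quasi-modular gauge on X with respect to ⊕. Then the family τ(w^sym) = {M ⊆ X : for every x ∈ M there exist r ∈ (0,1) and t > 0 with B(x;r,t) ⊆ M} is a topology on X, the analogous families τ⁺(w) (using B⁺) and τ⁻(w) (using B⁻) are topologies on X, and τ(w^sym) is the join (least upper bound) of τ⁺(w) and τ⁻(w) in the lattice of topologies on X. Moreover, if w is symmetric (w(x,y,t) = w(y,x,t) for all x,y,t) then τ⁺(w) = τ⁻(w) = τ(w^sym). -/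
/-!
Fix `r` and `t`. By continuity of the t-conorm at `(0, 0)` there is `s` with `a ⊕ b < r` whenever
`a, b < s`, so the triangle inequality gives `B(y; s, t/2) ⊆ B(x; r, t)` for every
`y ∈ B(x; s, t/2)`: the balls of either kind come from a base of a quasi-uniformity
(`exists_Bplus_subset`, `exists_Bminus_subset`). Hence the ball-interior of any set, i.e. the set
of points having a whole ball inside it, is open (`ballInterior_mem_tauOf`), and every ball is a
neighbourhood of its centre. If `T` contains both one-sided topologies and `M` is open for the
two-sided balls, then around each `x ∈ M` the intersection of the interiors of
`B⁺(x; r, t)` and `B⁻(x; r, t)` is a `T`-open set inside `M`, and `M` is the union of such sets.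
That the three families are topologies only uses that balls increase with both `r` and `t`; the
remaining inclusions and equalities come from comparing balls.
-/

open Set

/-- A continuous t-conorm on `[0,1]`. -/
structure IsContinuousTConorm (op : ℝ → ℝ → ℝ) : Prop where
  mem_Icc : ∀ a ∈ Icc (0:ℝ) 1, ∀ b ∈ Icc (0:ℝ) 1, op a b ∈ Icc (0:ℝ) 1
  comm : ∀ a ∈ Icc (0:ℝ) 1, ∀ b ∈ Icc (0:ℝ) 1, op a b = op b a
  assoc : ∀ a ∈ Icc (0:ℝ) 1, ∀ b ∈ Icc (0:ℝ) 1, ∀ c ∈ Icc (0:ℝ) 1,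
    op (op a b) c = op a (op b c)
  mono : ∀ a ∈ Icc (0:ℝ) 1, ∀ b ∈ Icc (0:ℝ) 1, ∀ a' ∈ Icc (0:ℝ) 1, ∀ b' ∈ Icc (0:ℝ) 1,
    a ≤ a' → b ≤ b' → op a b ≤ op a' b'
  continuousOn : ContinuousOn (fun p : ℝ × ℝ => op p.1 p.2) (Icc (0:ℝ) 1 ×ˢ Icc (0:ℝ) 1)
  zero_right : ∀ a ∈ Icc (0:ℝ) 1, op a 0 = a

/-- A quasi-modular gauge on `X` with respect to the t-conorm `op`:
`w : X → X → (0,∞) → [0,1)` with (W1), (W3), (W4). -/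
structure IsQuasiModularGauge {X : Type*} (op : ℝ → ℝ → ℝ) (w : X → X → ℝ → ℝ) : Prop where
  nonneg : ∀ x y : X, ∀ t > (0:ℝ), 0 ≤ w x y t
  lt_one : ∀ x y : X, ∀ t > (0:ℝ), w x y t < 1
  refl : ∀ x : X, ∀ t > (0:ℝ), w x x t = 0
  triangle : ∀ x y z : X, ∀ t > (0:ℝ), ∀ s > (0:ℝ), w x z (t + s) ≤ op (w x y t) (w y z s)
  continuousOn : ∀ x y : X, ContinuousOn (w x y) (Ioi 0)
  antitoneOn : ∀ x y : X, AntitoneOn (w x y) (Ioi 0)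

/-- Forward entourage. -/
def Eplus {X : Type*} (w : X → X → ℝ → ℝ) (r t : ℝ) : Set (X × X) :=
  {p : X × X | w p.1 p.2 t < r}

/-- Backward entourage. -/
def Eminus {X : Type*} (w : X → X → ℝ → ℝ) (r t : ℝ) : Set (X × X) :=
  {p : X × X | w p.2 p.1 t < r}

/-- Symmetric entourage. -/
def Esym {X : Type*} (w : X → X → ℝ → ℝ) (r t : ℝ) : Set (X × X) :=
  Eplus w r t ∩ Eminus w r t

/-- Forward ball. -/
def Bplus {X : Type*} (w : X → X → ℝ → ℝ) (x : X) (r t : ℝ) : Set X :=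
  {y : X | w x y t < r}

/-- Backward ball. -/
def Bminus {X : Type*} (w : X → X → ℝ → ℝ) (x : X) (r t : ℝ) : Set X :=
  {y : X | w y x t < r}

/-- Two-sided ball. -/
def Bsym {X : Type*} (w : X → X → ℝ → ℝ) (x : X) (r t : ℝ) : Set X :=
  Bplus w x r t ∩ Bminus w x r t

/-- The family of sets open with respect to a system of basic balls. -/
def tauOf {X : Type*} (B : X → ℝ → ℝ → Set X) : Set (Set X) :=
  {M : Set X | ∀ x ∈ M, ∃ r ∈ Ioo (0:ℝ) 1, ∃ t > (0:ℝ), B x r t ⊆ M}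

/-- A family of subsets of `X` is a topology on `X`. -/
def IsTopologyOn (X : Type*) (T : Set (Set X)) : Prop :=
  univ ∈ T ∧ (∀ S ⊆ T, ⋃₀ S ∈ T) ∧ (∀ U ∈ T, ∀ V ∈ T, U ∩ V ∈ T)

/-- The points `x` with a basic ball `B x r t` contained in `M`. Membership of `x` in `M` is not
required separately: it follows as soon as balls contain their centres. -/
def ballInterior {X : Type*} (B : X → ℝ → ℝ → Set X) (M : Set X) : Set X :=
  {x : X | ∃ r ∈ Ioo (0:ℝ) 1, ∃ t > (0:ℝ), B x r t ⊆ M}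

lemma ballInterior_subset {X : Type*} {B : X → ℝ → ℝ → Set X}
    (hself : ∀ x, ∀ r > (0:ℝ), ∀ t > (0:ℝ), x ∈ B x r t) (M : Set X) :
    ballInterior B M ⊆ M := by
  rintro x ⟨r, hr, t, ht, h⟩
  exact h (hself x r hr.1 t ht)

lemma ballInterior_mem_tauOf {X : Type*} {B : X → ℝ → ℝ → Set X}
    (hcomp : ∀ r > (0:ℝ), ∀ t > (0:ℝ), ∃ s ∈ Ioo (0:ℝ) 1, ∃ u > (0:ℝ),
      ∀ x, ∀ y ∈ B x s u, B y s u ⊆ B x r t) (M : Set X) :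
    ballInterior B M ∈ tauOf B := by
  rintro x ⟨r, hr, t, ht, h⟩
  obtain ⟨s, hs, u, hu, H⟩ := hcomp r hr.1 t ht
  exact ⟨s, hs, u, hu, fun y hy => ⟨s, hs, u, hu, (H x y hy).trans h⟩⟩

lemma isTopologyOn_tauOf {X : Type*} {B : X → ℝ → ℝ → Set X}
    (hmono : ∀ x, ∀ r r' : ℝ, ∀ t > (0:ℝ), ∀ t' : ℝ, r ≤ r' → t ≤ t' → B x r t ⊆ B x r' t') :
    IsTopologyOn X (tauOf B) := by
  refine ⟨fun x _ => ⟨1 / 2, by norm_num, 1, one_pos, subset_univ _⟩, ?_, ?_⟩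
  · rintro S hS x ⟨M, hM, hx⟩
    obtain ⟨r, hr, t, ht, h⟩ := hS hM x hx
    exact ⟨r, hr, t, ht, h.trans (subset_sUnion_of_mem hM)⟩
  · rintro U hU V hV x ⟨hxU, hxV⟩
    obtain ⟨r, hr, t, ht, h⟩ := hU x hxU
    obtain ⟨r', hr', t', ht', h'⟩ := hV x hxV
    have hm : 0 < min t t' := lt_min ht ht'
    exact ⟨min r r', ⟨lt_min hr.1 hr'.1, (min_le_left _ _).trans_lt hr.2⟩, min t t', hm,
      subset_inter
        ((hmono x _ _ _ hm _ (min_le_left _ _) (min_le_left _ _)).trans h)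
        ((hmono x _ _ _ hm _ (min_le_right _ _) (min_le_right _ _)).trans h')⟩

lemma tauOf_subset_tauOf {X : Type*} {B B' : X → ℝ → ℝ → Set X}
    (h : ∀ x r, ∀ t > (0:ℝ), B' x r t ⊆ B x r t) : tauOf B ⊆ tauOf B' := by
  intro M hM x hx
  obtain ⟨r, hr, t, ht, hB⟩ := hM x hx
  exact ⟨r, hr, t, ht, (h x r t ht).trans hB⟩

/-- Continuity of a t-conorm at `(0, 0)`, where its value is `0`. -/
lemma IsContinuousTConorm.exists_lt {op : ℝ → ℝ → ℝ} (hop : IsContinuousTConorm op)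
    {r : ℝ} (hr : 0 < r) :
    ∃ s ∈ Ioo (0:ℝ) 1, ∀ a b : ℝ, 0 ≤ a → 0 ≤ b → a < s → b < s → op a b < r := by
  have h0 : (0:ℝ) ∈ Icc (0:ℝ) 1 := ⟨le_rfl, zero_le_one⟩
  have hc := hop.continuousOn (0, 0) ⟨h0, h0⟩
  obtain ⟨δ, hδ, H⟩ := Metric.continuousWithinAt_iff.1 hc r hr
  refine ⟨min δ (1 / 2), ⟨lt_min hδ (by norm_num), (min_le_right _ _).trans_lt (by norm_num)⟩, ?_⟩
  intro a b ha hb has hbs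
  obtain ⟨ha1, ha2⟩ := lt_min_iff.1 has
  obtain ⟨hb1, hb2⟩ := lt_min_iff.1 hbs
  have hd : dist ((a, b) : ℝ × ℝ) (0, 0) < δ := by
    simp [Prod.dist_eq, abs_of_nonneg ha, abs_of_nonneg hb, ha1, hb1]
  have hab := H (x := (a, b)) ⟨⟨ha, by linarith⟩, ⟨hb, by linarith⟩⟩ hd
  simp only [hop.zero_right 0 h0, Real.dist_eq, sub_zero] at hab
  exact (le_abs_self _).trans_lt hab

section Gauge

variable {X : Type*} {op : ℝ → ℝ → ℝ} {w : X → X → ℝ → ℝ}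

lemma exists_triangle_lt (hop : IsContinuousTConorm op) (hw : IsQuasiModularGauge op w)
    {r : ℝ} (hr : 0 < r) {t : ℝ} (ht : 0 < t) :
    ∃ s ∈ Ioo (0:ℝ) 1, ∃ u > (0:ℝ), ∀ x y z, w x y u < s → w y z u < s → w x z t < r := by
  obtain ⟨s, hs, H⟩ := hop.exists_lt hr
  have hu : 0 < t / 2 := half_pos ht
  refine ⟨s, hs, t / 2, hu, fun x y z hxy hyz => ?_⟩
  have h := hw.triangle x y z _ hu _ hu
  rw [add_halves] at h
  exact h.trans_lt (H _ _ (hw.nonneg x y _ hu) (hw.nonneg y z _ hu) hxy hyz)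

lemma exists_Bplus_subset (hop : IsContinuousTConorm op) (hw : IsQuasiModularGauge op w) :
    ∀ r > (0:ℝ), ∀ t > (0:ℝ), ∃ s ∈ Ioo (0:ℝ) 1, ∃ u > (0:ℝ),
      ∀ x, ∀ y ∈ Bplus w x s u, Bplus w y s u ⊆ Bplus w x r t := by
  intro r hr t ht
  obtain ⟨s, hs, u, hu, H⟩ := exists_triangle_lt hop hw hr ht
  exact ⟨s, hs, u, hu, fun x y hxy z hyz => H x y z hxy hyz⟩

lemma exists_Bminus_subset (hop : IsContinuousTConorm op) (hw : IsQuasiModularGauge op w) :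
    ∀ r > (0:ℝ), ∀ t > (0:ℝ), ∃ s ∈ Ioo (0:ℝ) 1, ∃ u > (0:ℝ),
      ∀ x, ∀ y ∈ Bminus w x s u, Bminus w y s u ⊆ Bminus w x r t := by
  intro r hr t ht
  obtain ⟨s, hs, u, hu, H⟩ := exists_triangle_lt hop hw hr ht
  exact ⟨s, hs, u, hu, fun x y hyx z hzy => H z y x hzy hyx⟩

lemma gauge_lt_mono (hw : IsQuasiModularGauge op w) {x y : X} {r r' t t' : ℝ} (ht : 0 < t)
    (hr : r ≤ r') (htt : t ≤ t') (h : w x y t < r) : w x y t' < r' :=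
  ((hw.antitoneOn x y ht (ht.trans_le htt) htt).trans_lt h).trans_le hr

end Gauge

/-- `τ(w^sym)`, `τ⁺(w)` and `τ⁻(w)` are topologies and
`τ(w^sym) = τ⁺(w) ∨ τ⁻(w)` is the least topology finer than both; if `w` is
symmetric, all three coincide. -/
theorem join_topology
    {X : Type*} [Nonempty X] (op : ℝ → ℝ → ℝ) (w : X → X → ℝ → ℝ)
    (hop : IsContinuousTConorm op) (hw : IsQuasiModularGauge op w) :
    IsTopologyOn X (tauOf (Bsym w)) ∧
    IsTopologyOn X (tauOf (Bplus w)) ∧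
    IsTopologyOn X (tauOf (Bminus w)) ∧
    tauOf (Bplus w) ⊆ tauOf (Bsym w) ∧
    tauOf (Bminus w) ⊆ tauOf (Bsym w) ∧
    (∀ T : Set (Set X), IsTopologyOn X T →
      tauOf (Bplus w) ⊆ T → tauOf (Bminus w) ⊆ T → tauOf (Bsym w) ⊆ T) ∧
    ((∀ x y : X, ∀ t > (0:ℝ), w x y t = w y x t) →
      tauOf (Bplus w) = tauOf (Bminus w) ∧ tauOf (Bplus w) = tauOf (Bsym w)) := by
  have mp : ∀ x, ∀ r r' : ℝ, ∀ t > (0:ℝ), ∀ t' : ℝ, r ≤ r' → t ≤ t' →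
      Bplus w x r t ⊆ Bplus w x r' t' :=
    fun x r r' t ht t' hr htt y hy => gauge_lt_mono hw ht hr htt hy
  have mm : ∀ x, ∀ r r' : ℝ, ∀ t > (0:ℝ), ∀ t' : ℝ, r ≤ r' → t ≤ t' →
      Bminus w x r t ⊆ Bminus w x r' t' :=
    fun x r r' t ht t' hr htt y hy => gauge_lt_mono hw ht hr htt hy
  have selfp : ∀ x, ∀ r > (0:ℝ), ∀ t > (0:ℝ), x ∈ Bplus w x r t :=
    fun x r hr t ht => (hw.refl x t ht).trans_lt hr
  have selfm : ∀ x, ∀ r > (0:ℝ), ∀ t > (0:ℝ), x ∈ Bminus w x r t :=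
    fun x r hr t ht => (hw.refl x t ht).trans_lt hr
  refine ⟨isTopologyOn_tauOf fun x r r' t ht t' hr htt =>
      inter_subset_inter (mp x r r' t ht t' hr htt) (mm x r r' t ht t' hr htt),
    isTopologyOn_tauOf mp, isTopologyOn_tauOf mm,
    tauOf_subset_tauOf fun x r t _ => inter_subset_left,
    tauOf_subset_tauOf fun x r t _ => inter_subset_right, ?_, ?_⟩
  · intro T hT hplus hminus M hM
    -- `M` is the union of the `T`-open sets it contains.
    have hU : ⋃₀ {N | N ∈ T ∧ N ⊆ M} = M := by
      refine Subset.antisymm (sUnion_subset fun N hN => hN.2) fun x hx => ?_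
      obtain ⟨r, hr, t, ht, h⟩ := hM x hx
      refine ⟨ballInterior (Bplus w) (Bplus w x r t) ∩ ballInterior (Bminus w) (Bminus w x r t),
        ⟨hT.2.2 _ (hplus (ballInterior_mem_tauOf (exists_Bplus_subset hop hw) _))
          _ (hminus (ballInterior_mem_tauOf (exists_Bminus_subset hop hw) _)),
          (inter_subset_inter (ballInterior_subset selfp _) (ballInterior_subset selfm _)).trans h⟩,
        ⟨r, hr, t, ht, Subset.rfl⟩, ⟨r, hr, t, ht, Subset.rfl⟩⟩
    rw [← hU]
    exact hT.2.1 _ fun N hN => hN.1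
  · intro hsymm
    have e : ∀ x r, ∀ t > (0:ℝ), Bplus w x r t = Bminus w x r t := fun x r t ht => by
      ext y
      simp only [Bplus, Bminus, mem_ofPred_eq, hsymm x y t ht]
    refine ⟨Subset.antisymm (tauOf_subset_tauOf fun x r t ht => (e x r t ht).ge)
        (tauOf_subset_tauOf fun x r t ht => (e x r t ht).le),
      Subset.antisymm (tauOf_subset_tauOf fun x r t _ => inter_subset_left)
        (tauOf_subset_tauOf fun x r t ht => subset_inter Subset.rfl (e x r t ht).le)⟩
end

section
/- Let 1 ≤ p < ∞ and let F be a subset of the space ℓ^p of real sequences x = (x_k)_{k∈ℕ} with Σ_k |x_k|^p < ∞, equipped with the norm ‖x‖_p = (Σ_k |x_k|^p)^{1/p}. Then F is totally bounded if and only if (i) F is pointwise bounded, i.e. for every k ∈ ℕ there exists M_k such that |x_k| ≤ M_k for all x ∈ F, and (ii) for every ε > 0 there exists n ∈ ℕ such that Σ_{k ≥ n} |x_k|^p < ε^p for all x ∈ F. -/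
/-!
Truncation to the first `n` coordinates, `P x = ∑ i < n, lp.single q i (x i)`, drives both
directions, because the `p`-th power of `‖x - P x‖` is exactly the tail `∑ k ≥ n, |x k| ^ p`
(`norm_sub_trunc_rpow`), and because `x ↦ x - P x` is additive and does not increase the norm
(`norm_sub_trunc_le`).

If `F` is totally bounded, it is bounded, hence pointwise bounded. Its tails are uniformly small
because those of the finitely many points of an `ε / 2`-net are, and any `x ∈ F` differs from a
point of the net by a vector whose tail has norm less than `ε / 2`.

Conversely, pointwise boundedness puts `F` inside a box `∏ k, [-M k, M k]`, compact in `ℕ → ℝ` by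
Tychonoff. Truncation is continuous from the product topology to `ℓ^p`, so the truncations of
points of `F` lie in a compact set, and uniformly small tails say that `F` is within `ε / 2` of it.
-/

open scoped ENNReal

/-- Truncation of a sequence to its first `n` coordinates, as an element of `ℓ^q`. It is defined on
all sequences, so that its continuity for the product topology can be stated. -/
noncomputable def lpTrunc (q : ℝ≥0∞) (n : ℕ) (v : ℕ → ℝ) : lp (fun _ : ℕ => ℝ) q :=
  ∑ i ∈ Finset.range n, lp.single q i (v i)

theorem continuous_lpTrunc (q : ℝ≥0∞) [Fact (1 ≤ q)] (n : ℕ) : Continuous (lpTrunc q n) :=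
  continuous_finsetSum _ fun i _ =>
    (lp.isometry_single (E := fun _ : ℕ => ℝ) (p := q) i).continuous.comp (continuous_apply i)

theorem lpTrunc_sub (q : ℝ≥0∞) (n : ℕ) (x y : lp (fun _ : ℕ => ℝ) q) :
    lpTrunc q n ((x - y : lp (fun _ : ℕ => ℝ) q) : ∀ _ : ℕ, ℝ) =
      lpTrunc q n x - lpTrunc q n y := by
  simp only [lpTrunc, lp.coeFn_sub, Pi.sub_apply, lp.single_sub, Finset.sum_sub_distrib]

theorem norm_sub_trunc_rpow {q : ℝ≥0∞} (hq : 0 < q.toReal) (n : ℕ)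
    (x : lp (fun _ : ℕ => ℝ) q) :
    ‖x - lpTrunc q n x‖ ^ q.toReal =
      ∑' k : ℕ, |(x : ∀ _ : ℕ, ℝ) (n + k)| ^ q.toReal := by
  have h := lp.norm_compl_sum_single hq x (Finset.range n)
  have hs := lp.hasSum_norm hq x
  have h2 := hs.summable.sum_add_tsum_nat_add n
  rw [hs.tsum_eq] at h2
  simp only [Real.norm_eq_abs] at h2
  simp only [add_comm n]
  change ‖x - lpTrunc q n x‖ ^ q.toReal = _ at h
  simp only [Real.norm_eq_abs (x _)] at h
  linarith

theorem norm_sub_trunc_le {q : ℝ≥0∞} (hq : 0 < q.toReal) (n : ℕ)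
    (x : lp (fun _ : ℕ => ℝ) q) : ‖x - lpTrunc q n x‖ ≤ ‖x‖ := by
  have h := lp.norm_compl_sum_single hq x (Finset.range n)
  have h2 : 0 ≤ ∑ i ∈ Finset.range n, ‖x i‖ ^ q.toReal :=
    Finset.sum_nonneg fun i _ => by positivity
  refine (Real.rpow_le_rpow_iff (lp.norm_nonneg' _) (lp.norm_nonneg' _) hq).1 ?_
  change ‖x - lpTrunc q n x‖ ^ q.toReal = _ at h
  linarith

/-- total boundedness in `ℓ^p`, Hanche-Olsen–Holden Thm 4:
a set `F ⊆ ℓ^p` is totally bounded iff it is pointwise bounded and has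
uniformly small tails. -/
theorem lp_totallyBounded_iff (p : ℝ) (hp : 1 ≤ p)
    (F : Set (lp (fun _ : ℕ => ℝ) (ENNReal.ofReal p))) :
    haveI : Fact ((1 : ℝ≥0∞) ≤ ENNReal.ofReal p) :=
      ⟨by rw [← ENNReal.ofReal_one]; exact ENNReal.ofReal_le_ofReal hp⟩
    (TotallyBounded F ↔
      ((∀ k : ℕ, ∃ M : ℝ, ∀ x ∈ F, |(x : ∀ _ : ℕ, ℝ) k| ≤ M) ∧
       (∀ ε > (0:ℝ), ∃ n : ℕ, ∀ x ∈ F,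
          (∑' k : ℕ, |(x : ∀ _ : ℕ, ℝ) (n + k)| ^ p) < ε ^ p))) := by
  have hp0 : 0 < p := by linarith
  have hpr : (ENNReal.ofReal p).toReal = p := ENNReal.toReal_ofReal hp0.le
  have hq : 0 < (ENNReal.ofReal p).toReal := by rwa [hpr]
  have : Fact ((1 : ℝ≥0∞) ≤ ENNReal.ofReal p) :=
    ⟨by rw [← ENNReal.ofReal_one]; exact ENNReal.ofReal_le_ofReal hp⟩
  have htail : ∀ (n : ℕ) (x : lp (fun _ : ℕ => ℝ) (ENNReal.ofReal p)) (ε : ℝ), 0 < ε →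
      ((∑' k : ℕ, |(x : ∀ _ : ℕ, ℝ) (n + k)| ^ p) < ε ^ p ↔
        ‖x - lpTrunc (ENNReal.ofReal p) n x‖ < ε) := by
    intro n x ε hε
    have h := norm_sub_trunc_rpow hq n x
    rw [hpr] at h
    rw [← h, Real.rpow_lt_rpow_iff (norm_nonneg _) hε.le hp0]
  constructor
  · intro hF
    refine ⟨fun k => ?_, fun ε hε => ?_⟩
    · obtain ⟨C, hC⟩ := hF.isBounded.exists_norm_le
      exact ⟨C, fun x hx => (lp.norm_apply_le_norm (ENNReal.ofReal_pos.2 hp0).ne' x k).trans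
        (hC x hx)⟩
    · obtain ⟨t, ht, hFt⟩ := Metric.totallyBounded_iff.1 hF (ε / 2) (half_pos hε)
      have hev : ∀ y ∈ t, ∀ᶠ n in Filter.atTop,
          ‖y - lpTrunc (ENNReal.ofReal p) n y‖ < ε / 2 := by
        intro y _
        have h := (lp.hasSum_single ENNReal.ofReal_ne_top y).tendsto_sum_nat
        filter_upwards [h.eventually (Metric.ball_mem_nhds y (half_pos hε))] with n hn
        rw [← dist_eq_norm, dist_comm]
        exact hn
      obtain ⟨n, hn⟩ := ((Set.Finite.eventually_all ht).2 hev).exists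
      refine ⟨n, fun x hx => (htail n x ε hε).2 ?_⟩
      obtain ⟨y, hy, hxy⟩ := Set.mem_iUnion₂.1 (hFt hx)
      rw [Metric.mem_ball, dist_eq_norm] at hxy
      have hsplit : x - lpTrunc (ENNReal.ofReal p) n x =
          ((x - y) - lpTrunc (ENNReal.ofReal p) n
            ((x - y : lp (fun _ : ℕ => ℝ) (ENNReal.ofReal p)) : ∀ _ : ℕ, ℝ)) +
          (y - lpTrunc (ENNReal.ofReal p) n y) := by
        rw [lpTrunc_sub]; abel
      rw [hsplit]
      linarith [norm_add_le ((x - y) - lpTrunc (ENNReal.ofReal p) n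
            ((x - y : lp (fun _ : ℕ => ℝ) (ENNReal.ofReal p)) : ∀ _ : ℕ, ℝ))
          (y - lpTrunc (ENNReal.ofReal p) n y), norm_sub_trunc_le hq n (x - y), hn y hy]
  · rintro ⟨hbd, hsm⟩
    choose M hM using hbd
    refine Metric.totallyBounded_iff.2 fun ε hε => ?_
    obtain ⟨n, hn⟩ := hsm (ε / 2) (half_pos hε)
    have hK : IsCompact (Set.univ.pi fun k => Set.Icc (-M k) (M k)) :=
      isCompact_univ_pi fun k => isCompact_Icc
    obtain ⟨t, ht, hKt⟩ := Metric.totallyBounded_iff.1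
      (hK.image (continuous_lpTrunc (ENNReal.ofReal p) n)).totallyBounded (ε / 2) (half_pos hε)
    refine ⟨t, ht, fun x hx => ?_⟩
    obtain ⟨y, hy, hxy⟩ := Set.mem_iUnion₂.1
      (hKt (Set.mem_image_of_mem _ fun k _ => abs_le.1 (hM k x hx)))
    refine Set.mem_iUnion₂.2 ⟨y, hy, ?_⟩
    have h1 := (htail n x _ (half_pos hε)).1 (hn x hx)
    rw [← dist_eq_norm] at h1
    rw [Metric.mem_ball] at hxy ⊢
    linarith [dist_triangle x (lpTrunc (ENNReal.ofReal p) n x) y]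
end

section
/- Let n ≥ 1, 1 ≤ p < ∞, and let F be a subset of L^p(ℝ^n) (with Lebesgue measure). Then F is totally bounded in L^p(ℝ^n) if and only if the following three conditions hold: (i) F is bounded, i.e. there exists M with ‖f‖_p ≤ M for all f ∈ F; (ii) F is tight: for every ε > 0 there exists R > 0 such that ∫_{|x| > R} |f(x)|^p dx < ε^p for all f ∈ F; (iii) F is uniformly translation-equicontinuous in L^p: for every ε > 0 there exists δ > 0 such that for all y ∈ ℝ^n with |y| < δ and all f ∈ F, ∫_{ℝ^n} |f(x + y) − f(x)|^p dx < ε^p. -/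
/-!
The Kolmogorov–Riesz–Fréchet criterion.

*Necessity.* The tail `N_R f = ‖f‖_{L^p(|x| > R)}` and the translation defect
`N_y f = ‖f(· + y) - f‖_p` are seminorms bounded by `2‖f‖_p`, and for each single `f` they tend to
`0` as `R → ∞`, respectively `y → 0`: the former by density of compactly supported functions, the
latter by continuity of translation in `L^p`. A family of functionals that are uniformly Lipschitz
and converge pointwise to `0` converges uniformly on totally bounded sets
(`eventually_forall_lt_of_totallyBounded`).

*Sufficiency.* Let `A f` be the average of `f` over balls of radius `δ`. By Jensen and Tonelli,
`‖A f - f‖_p ≤ sup_{|y| < δ} ‖f(· + y) - f‖_p` (`eLpNorm_ballAverage_sub_le`), so `A f` is close to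
`f` uniformly on the family when `δ` is small. Jensen also gives the pointwise bounds
`|A f x| ≤ c ‖f‖_p` and `|A f x - A f z| ≤ c ‖f(· + (x - z)) - f‖_p` with `c = |B_δ|^{-1/p}`
(`enorm_ballAverage_le`, `enorm_ballAverage_sub_le`): the averages are uniformly bounded and
equicontinuous. Hence, up to a small error, `f` is determined in `L^p` by the values of `A f` at the
points of a finite net of a large ball. These values form a bounded subset of a finite-dimensional
space, which is totally bounded (`totallyBounded_of_map`).

The argument only uses a translation-invariant measure on a proper normed group, so the lemmas are
stated for a Haar measure on such a group.
-/

open MeasureTheory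
open scoped ENNReal
open Filter Topology Metric

/-! ### Totally bounded families are tight and translation-equicontinuous -/

section Necessity

/-- Functionals that are uniformly Lipschitz and converge to `0` pointwise converge to `0` uniformly
on totally bounded sets: it suffices to control them on a finite net. -/
theorem eventually_forall_lt_of_totallyBounded {X ι : Type*} [PseudoMetricSpace X] {l : Filter ι}
    {N : ι → X → ℝ≥0∞} {C : ℝ≥0∞} (hC : C ≠ ∞) (hN : ∀ i f g, N i f ≤ N i g + C * edist f g)
    (hl : ∀ f, ∀ ε : ℝ≥0∞, 0 < ε → ∀ᶠ i in l, N i f < ε) {F : Set X} (hF : TotallyBounded F)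
    {ε : ℝ≥0∞} (hε : 0 < ε) : ∀ᶠ i in l, ∀ f ∈ F, N i f < ε := by
  have hε2 : 0 < ε / 2 := ENNReal.half_pos hε.ne'
  have hη : 0 < ε / 2 / (C + 1) :=
    ENNReal.div_pos hε2.ne' (by simp [hC])
  obtain ⟨t, ht, hFt⟩ := EMetric.totallyBounded_iff.1 hF _ hη
  have : ∀ᶠ i in l, ∀ g ∈ t, N i g < ε / 2 := (ht.eventually_all).2 fun g _ => hl g _ hε2
  filter_upwards [this] with i hi f hf
  obtain ⟨g, hg, hfg⟩ := Set.mem_iUnion₂.1 (hFt hf)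
  have h1 : C * edist f g ≤ ε / 2 := by
    calc C * edist f g ≤ (C + 1) * (ε / 2 / (C + 1)) := by
          gcongr
          · exact le_self_add
          · exact (Metric.mem_eball.1 hfg).le
      _ ≤ ε / 2 := ENNReal.mul_div_le
  calc N i f ≤ N i g + C * edist f g := hN i f g
    _ < ε / 2 + ε / 2 := ENNReal.add_lt_add_of_lt_of_le
        (ne_top_of_le_ne_top (ENNReal.mul_ne_top hC (ne_top_of_lt hfg)) le_rfl) (hi g hg) h1
    _ = ε := ENNReal.add_halves ε

variable {E : Type*} [NormedAddCommGroup E] [ProperSpace E] [MeasureSpace E]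
  [BorelSpace E] [(volume : Measure E).IsAddHaarMeasure] {P : ℝ≥0∞}

theorem eventually_tail_lt [Fact (1 ≤ P)] (hP : P ≠ ∞) (f : Lp ℝ P (volume : Measure E)) {ε : ℝ≥0∞}
    (hε : 0 < ε) :
    ∀ᶠ R : ℝ in atTop, eLpNorm f P (volume.restrict {x : E | R < ‖x‖}) < ε := by
  obtain ⟨η, hη, hηε⟩ := exists_between hε
  obtain ⟨g, hgs, hfg, -, -⟩ :=
    (Lp.memLp f).exists_hasCompactSupport_eLpNorm_sub_le hP (ε := η) hη.ne'
  obtain ⟨R₀, hR₀⟩ := hgs.isCompact.isBounded.exists_norm_le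
  filter_upwards [eventually_ge_atTop R₀] with R hR
  refine lt_of_le_of_lt ?_ hηε
  refine le_trans (le_of_eq (eLpNorm_congr_ae ?_))
    ((eLpNorm_mono_measure ((f : E → ℝ) - g)
      (Measure.restrict_le_self (s := {x : E | R < ‖x‖}))).trans hfg)
  have hS : MeasurableSet {x : E | R < ‖x‖} := measurableSet_lt measurable_const measurable_norm
  filter_upwards [ae_restrict_mem hS] with x hx
  have : g x = 0 := by
    by_contra h
    have := hR₀ x (subset_tsupport g h)
    have : R < ‖x‖ := hx
    linarith
  simp [this]

theorem eventually_translate_lt [Fact (1 ≤ P)] (hP : P ≠ ∞) (f : Lp ℝ P (volume : Measure E))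
    {ε : ℝ≥0∞} (hε : 0 < ε) :
    ∀ᶠ y : E in 𝓝 0, eLpNorm (fun x => f (x + y) - f x) P volume < ε := by
  let g : E → C(E, E) := fun y => ⟨fun x => x + y, by fun_prop⟩
  have hg : Continuous g :=
    ContinuousMap.continuous_of_continuous_uncurry _ (by
      change Continuous fun q : E × E => q.2 + q.1
      fun_prop)
  have hgm : ∀ y, MeasurePreserving (g y) (volume : Measure E) volume :=
    fun y => measurePreserving_add_right volume y
  have h := (Continuous.compMeasurePreservingLp (f := fun _ : E => f) continuous_const hg hgm
    hP).tendsto 0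
  have h2 := (EMetric.tendsto_nhds.1 h) ε hε
  filter_upwards [h2] with y hy
  rw [Lp.edist_def] at hy
  refine lt_of_eq_of_lt (eLpNorm_congr_ae ?_) hy
  filter_upwards [Lp.coeFn_compMeasurePreserving f (hgm y),
    Lp.coeFn_compMeasurePreserving f (hgm 0)] with x h1 h2
  rw [Pi.sub_apply, h1, h2]
  simp [g]

theorem tail_of_totallyBounded [Fact (1 ≤ P)] (hP : P ≠ ∞) {F : Set (Lp ℝ P (volume : Measure E))}
    (hF : TotallyBounded F) {ε : ℝ≥0∞} (hε : 0 < ε) :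
    ∀ᶠ R : ℝ in atTop, ∀ f ∈ F, eLpNorm f P (volume.restrict {x : E | R < ‖x‖}) < ε := by
  refine eventually_forall_lt_of_totallyBounded ENNReal.one_ne_top (fun R f g => ?_)
    (fun f ε hε => eventually_tail_lt hP f hε) hF hε
  rw [one_mul, Lp.edist_def]
  set μ := (volume : Measure E).restrict {x : E | R < ‖x‖}
  have hf := (Lp.memLp f).aestronglyMeasurable
  have hg := (Lp.memLp g).aestronglyMeasurable
  calc eLpNorm f P μ = eLpNorm ((g : E → ℝ) + ((f : E → ℝ) - (g : E → ℝ))) P μ := by congr 1; simp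
    _ ≤ eLpNorm g P μ + eLpNorm ((f : E → ℝ) - (g : E → ℝ)) P μ :=
        eLpNorm_add_le hg.restrict (hf.sub hg).restrict Fact.out
    _ ≤ _ := by gcongr; exact Measure.restrict_le_self

theorem translate_of_totallyBounded [Fact (1 ≤ P)] (hP : P ≠ ∞)
    {F : Set (Lp ℝ P (volume : Measure E))} (hF : TotallyBounded F) {ε : ℝ≥0∞} (hε : 0 < ε) :
    ∀ᶠ y : E in 𝓝 0, ∀ f ∈ F, eLpNorm (fun x => f (x + y) - f x) P volume < ε := by
  refine eventually_forall_lt_of_totallyBounded (C := 2) (by simp) (fun y f g => ?_)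
    (fun f ε hε => eventually_translate_lt hP f hε) hF hε
  rw [Lp.edist_def]
  have hτ := measurePreserving_add_right (volume : Measure E) y
  have hf := (Lp.memLp f).aestronglyMeasurable
  have hg := (Lp.memLp g).aestronglyMeasurable
  have hfg := hf.sub hg
  have hfgτ := hfg.comp_measurePreserving hτ
  have hgτ := hg.comp_measurePreserving hτ
  calc eLpNorm (fun x => f (x + y) - f x) P volume
      = eLpNorm (((g : E → ℝ) ∘ (· + y) - (g : E → ℝ)) +
          (((f : E → ℝ) - (g : E → ℝ)) ∘ (· + y) - ((f : E → ℝ) - (g : E → ℝ)))) P volume := by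
        congr 1; ext x; simp; ring
    _ ≤ eLpNorm ((g : E → ℝ) ∘ (· + y) - (g : E → ℝ)) P volume +
          eLpNorm (((f : E → ℝ) - (g : E → ℝ)) ∘ (· + y) - ((f : E → ℝ) - (g : E → ℝ))) P volume :=
        eLpNorm_add_le (hgτ.sub hg) (hfgτ.sub hfg) Fact.out
    _ ≤ eLpNorm ((g : E → ℝ) ∘ (· + y) - (g : E → ℝ)) P volume +
          (eLpNorm (((f : E → ℝ) - (g : E → ℝ)) ∘ (· + y)) P volume + eLpNorm ((f : E → ℝ) - (g : E → ℝ)) P volume) := by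
        gcongr; exact eLpNorm_sub_le hfgτ hfg Fact.out
    _ = _ := by rw [eLpNorm_comp_measurePreserving hfg hτ, two_mul]; rfl

end Necessity

/-! ### Averages over balls and the sufficiency of the three conditions -/

section Sufficiency

variable {E : Type*} [NormedAddCommGroup E] [ProperSpace E] [MeasureSpace E]
  [BorelSpace E] [(volume : Measure E).IsAddHaarMeasure] {P : ℝ≥0∞}

theorem lintegral_enorm_rpow {α : Type*} [MeasurableSpace α] {μ : Measure α} (hP1 : 1 ≤ P)
    (hP : P ≠ ∞) (g : α → ℝ) : ∫⁻ x, ‖g x‖ₑ ^ P.toReal ∂μ = eLpNorm g P μ ^ P.toReal := by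
  have h0 : P ≠ 0 := (one_pos.trans_le hP1).ne'
  rw [eLpNorm_eq_lintegral_rpow_enorm_toReal h0 hP, ← ENNReal.rpow_mul, one_div,
    inv_mul_cancel₀ (ENNReal.toReal_pos h0 hP).ne', ENNReal.rpow_one]

/-- Jensen's inequality for a probability measure, in the form `|∫ g dν| ≤ ‖g‖_{L^p(ν)}`. -/
theorem enorm_integral_le_eLpNorm {α : Type*} [MeasurableSpace α] {ν : Measure α}
    [IsProbabilityMeasure ν] (hP1 : 1 ≤ P) {g : α → ℝ} (hg : AEStronglyMeasurable g ν) :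
    ‖∫ y, g y ∂ν‖ₑ ≤ eLpNorm g P ν :=
  (enorm_integral_le_lintegral_enorm g).trans <| by
    rw [← eLpNorm_one_eq_lintegral_enorm]
    exact eLpNorm_le_eLpNorm_of_exponent_le hP1 hg

/-- Averaging `f` over random shifts `y ∼ ν` moves it in `L^p` by at most the largest distance from
`f` to one of its shifts; this is Jensen's inequality in `y` followed by Tonelli. -/
theorem eLpNorm_average_sub_le {ν : Measure E} [IsProbabilityMeasure ν] (hP1 : 1 ≤ P) (hP : P ≠ ∞)
    {f : E → ℝ} (hf : StronglyMeasurable f) (hint : ∀ x, Integrable (fun y => f (x + y)) ν)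
    {ε : ℝ≥0∞} (hε : ∀ᵐ y ∂ν, eLpNorm (fun x => f (x + y) - f x) P volume ≤ ε) :
    eLpNorm (fun x => (∫ y, f (x + y) ∂ν) - f x) P volume ≤ ε := by
  have hp : 0 < P.toReal := ENNReal.toReal_pos (one_pos.trans_le hP1).ne' hP
  rw [← ENNReal.rpow_le_rpow_iff hp, ← lintegral_enorm_rpow hP1 hP]
  have hmeas : StronglyMeasurable fun q : E × E => f (q.1 + q.2) - f q.1 :=
    (hf.comp_measurable (measurable_fst.add measurable_snd)).sub (hf.comp_measurable measurable_fst)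
  calc ∫⁻ x, ‖(∫ y, f (x + y) ∂ν) - f x‖ₑ ^ P.toReal
      ≤ ∫⁻ x, ∫⁻ y, ‖f (x + y) - f x‖ₑ ^ P.toReal ∂ν := by
        refine lintegral_mono fun x => ?_
        have h : (∫ y, f (x + y) ∂ν) - f x = ∫ y, (f (x + y) - f x) ∂ν := by
          rw [integral_sub (hint x) (integrable_const _)]; simp
        rw [h, lintegral_enorm_rpow hP1 hP]
        gcongr
        exact enorm_integral_le_eLpNorm hP1
          (hmeas.comp_measurable measurable_prodMk_left).aestronglyMeasurable
    _ = ∫⁻ y, (∫⁻ x, ‖f (x + y) - f x‖ₑ ^ P.toReal) ∂ν :=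
        lintegral_lintegral_swap (hmeas.measurable.enorm.pow_const _).aemeasurable
    _ ≤ ∫⁻ y, ε ^ P.toReal ∂ν := by
        refine lintegral_mono_ae ?_
        filter_upwards [hε] with y hy
        rw [lintegral_enorm_rpow hP1 hP]
        gcongr
    _ = ε ^ P.toReal := by simp

/-- The uniform probability measure on the ball of radius `δ` around the origin. -/
noncomputable def ballMeasure (E : Type*) [NormedAddCommGroup E] [MeasureSpace E] (δ : ℝ) :
    Measure E :=
  (volume (ball (0 : E) δ))⁻¹ • volume.restrict (ball (0 : E) δ)

/-- The average of `f` over the ball of radius `δ` around `x`, that is, the convolution of `f` with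
the normalised indicator of a ball. -/
noncomputable def ballAverage (δ : ℝ) (f : E → ℝ) (x : E) : ℝ :=
  ∫ y, f (x + y) ∂(ballMeasure E δ)

omit [BorelSpace E] in
theorem isProbabilityMeasure_ballMeasure {δ : ℝ} (hδ : 0 < δ) :
    IsProbabilityMeasure (ballMeasure E δ) :=
  ⟨by
    simp only [ballMeasure, Measure.smul_apply, Measure.restrict_apply_univ, smul_eq_mul]
    exact ENNReal.inv_mul_cancel (measure_ball_pos _ _ hδ).ne' measure_ball_lt_top.ne⟩

omit [ProperSpace E] [BorelSpace E] [(volume : Measure E).IsAddHaarMeasure] in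
theorem eLpNorm_ballMeasure_le (hP : P ≠ ∞) {δ : ℝ} (g : E → ℝ) :
    eLpNorm g P (ballMeasure E δ) ≤
      (volume (ball (0 : E) δ))⁻¹ ^ (1 / P).toReal * eLpNorm g P volume := by
  rw [ballMeasure, eLpNorm_smul_measure_of_ne_top hP, smul_eq_mul]
  gcongr
  exact Measure.restrict_le_self

omit [ProperSpace E] [BorelSpace E] in
theorem ballConst_ne_top {δ : ℝ} (hδ : 0 < δ) :
    (volume (ball (0 : E) δ))⁻¹ ^ (1 / P).toReal ≠ ∞ :=
  ENNReal.rpow_ne_top_of_nonneg ENNReal.toReal_nonneg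
    (ENNReal.inv_ne_top.2 (measure_ball_pos _ _ hδ).ne')

omit [ProperSpace E] in
theorem memLp_translate {f : E → ℝ} (hf : MemLp f P volume) (x : E) :
    MemLp (fun y => f (x + y)) P volume :=
  hf.comp_measurePreserving (measurePreserving_add_left volume x)

theorem integrable_translate_ballMeasure (hP1 : 1 ≤ P) {δ : ℝ} (hδ : 0 < δ)
    {f : E → ℝ} (hf : MemLp f P volume) (x : E) :
    Integrable (fun y => f (x + y)) (ballMeasure E δ) := by
  have := isProbabilityMeasure_ballMeasure (E := E) hδ
  have hm : MemLp (fun y => f (x + y)) P (ballMeasure E δ) :=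
    ((memLp_translate hf x).restrict _).smul_measure
      (ENNReal.inv_ne_top.2 (measure_ball_pos _ _ hδ).ne')
  exact hm.integrable hP1

theorem enorm_ballAverage_le (hP1 : 1 ≤ P) (hP : P ≠ ∞) {δ : ℝ} (hδ : 0 < δ) {f : E → ℝ}
    (hf : MemLp f P volume) (x : E) :
    ‖ballAverage δ f x‖ₑ ≤
      (volume (ball (0 : E) δ))⁻¹ ^ (1 / P).toReal * eLpNorm f P volume := by
  have := isProbabilityMeasure_ballMeasure (E := E) hδ
  refine (enorm_integral_le_eLpNorm hP1
    (integrable_translate_ballMeasure hP1 hδ hf x).aestronglyMeasurable).trans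
    ((eLpNorm_ballMeasure_le hP _).trans_eq ?_)
  congr 1
  exact eLpNorm_comp_measurePreserving hf.aestronglyMeasurable (measurePreserving_add_left volume x)

theorem enorm_ballAverage_sub_le (hP1 : 1 ≤ P) (hP : P ≠ ∞) {δ : ℝ} (hδ : 0 < δ) {f : E → ℝ}
    (hf : MemLp f P volume) (x z : E) :
    ‖ballAverage δ f x - ballAverage δ f z‖ₑ ≤
      (volume (ball (0 : E) δ))⁻¹ ^ (1 / P).toReal *
        eLpNorm (fun y => f (y + (x - z)) - f y) P volume := by
  have := isProbabilityMeasure_ballMeasure (E := E) hδ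
  have hx := integrable_translate_ballMeasure hP1 hδ hf x
  have hz := integrable_translate_ballMeasure hP1 hδ hf z
  rw [ballAverage, ballAverage, ← integral_sub hx hz]
  refine (enorm_integral_le_eLpNorm hP1 (hx.sub hz).aestronglyMeasurable).trans
    ((eLpNorm_ballMeasure_le hP _).trans_eq ?_)
  congr 1
  have hm : AEStronglyMeasurable (fun y => f (y + (x - z)) - f y) (volume : Measure E) :=
    (hf.aestronglyMeasurable.comp_measurePreserving
      (measurePreserving_add_right volume (x - z))).sub hf.aestronglyMeasurable
  rw [← eLpNorm_comp_measurePreserving hm (measurePreserving_add_left volume z)]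
  congr 1
  ext y
  have e : z + y + (x - z) = x + y := by abel
  simp [e]

theorem eLpNorm_ballAverage_sub_le (hP1 : 1 ≤ P) (hP : P ≠ ∞) {δ : ℝ} (hδ : 0 < δ) {f : E → ℝ}
    (hf : MemLp f P volume) (hfm : StronglyMeasurable f) {ε : ℝ≥0∞}
    (hε : ∀ y : E, ‖y‖ < δ → eLpNorm (fun x => f (x + y) - f x) P volume ≤ ε) :
    eLpNorm (ballAverage δ f - f) P volume ≤ ε := by
  have := isProbabilityMeasure_ballMeasure (E := E) hδ
  refine eLpNorm_average_sub_le hP1 hP hfm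
    (integrable_translate_ballMeasure hP1 hδ hf) ?_
  refine Measure.ae_smul_measure ?_ _
  filter_upwards [ae_restrict_mem measurableSet_ball] with y hy
  exact hε y (by simpa using hy)

theorem stronglyMeasurable_ballAverage {δ : ℝ} (hδ : 0 < δ) {f : E → ℝ}
    (hf : StronglyMeasurable f) : StronglyMeasurable (ballAverage δ f) := by
  have := isProbabilityMeasure_ballMeasure (E := E) hδ
  exact StronglyMeasurable.integral_prod_right
    (hf.comp_measurable (measurable_fst.add measurable_snd))

/-- Splitting `f - g` into its tail outside the ball of radius `R` and, inside that ball, the three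
terms `A f - A g`, `f - A f` and `g - A g`, where `A` is the averaging operator. -/
theorem eLpNorm_sub_le_of_ballAverage (hP1 : 1 ≤ P) {δ R C : ℝ} (hδ : 0 < δ) {f g : E → ℝ}
    (hf : StronglyMeasurable f) (hg : StronglyMeasurable g) {ε : ℝ≥0∞}
    (hfR : eLpNorm f P (volume.restrict {x : E | R < ‖x‖}) ≤ ε)
    (hgR : eLpNorm g P (volume.restrict {x : E | R < ‖x‖}) ≤ ε)
    (hfA : eLpNorm (ballAverage δ f - f) P volume ≤ ε)
    (hgA : eLpNorm (ballAverage δ g - g) P volume ≤ ε)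
    (hC : ∀ x ∈ closedBall (0 : E) R, ‖ballAverage δ f x - ballAverage δ g x‖ ≤ C) :
    eLpNorm (f - g) P volume ≤
      4 * ε + volume (closedBall (0 : E) R) ^ P.toReal⁻¹ * ENNReal.ofReal C := by
  set S : Set E := closedBall 0 R with hSdef
  have hS : MeasurableSet S := measurableSet_closedBall
  have hSc : {x : E | R < ‖x‖} = Sᶜ := by ext x; simp [hSdef]
  rw [hSc] at hfR hgR
  have hAf := (stronglyMeasurable_ballAverage hδ hf)
  have hAg := (stronglyMeasurable_ballAverage hδ hg)
  have hout : eLpNorm (f - g) P (volume.restrict Sᶜ) ≤ ε + ε :=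
    (eLpNorm_sub_le hf.aestronglyMeasurable hg.aestronglyMeasurable hP1).trans
      (add_le_add hfR hgR)
  have hin : eLpNorm (f - g) P (volume.restrict S) ≤
      (volume S ^ P.toReal⁻¹ * ENNReal.ofReal C + ε) + ε := by
    have h1 : eLpNorm (ballAverage δ f - ballAverage δ g) P (volume.restrict S) ≤
        volume S ^ P.toReal⁻¹ * ENNReal.ofReal C := by
      have := eLpNorm_le_of_ae_bound (p := P) (μ := volume.restrict S)
        (f := ballAverage δ f - ballAverage δ g) (C := C) (by
          filter_upwards [ae_restrict_mem hS] with x hx using hC x hx)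
      simpa using this
    have e : f - g = ((ballAverage δ f - ballAverage δ g) - (ballAverage δ f - f)) +
        (ballAverage δ g - g) := by abel
    rw [e]
    refine (eLpNorm_add_le ((hAf.sub hAg).sub (hAf.sub hf)).aestronglyMeasurable
      (hAg.sub hg).aestronglyMeasurable hP1).trans ?_
    refine add_le_add ((eLpNorm_sub_le (hAf.sub hAg).aestronglyMeasurable
      (hAf.sub hf).aestronglyMeasurable hP1).trans (add_le_add h1 ?_)) ?_
    · exact (eLpNorm_mono_measure _ Measure.restrict_le_self).trans hfA
    · exact (eLpNorm_mono_measure _ Measure.restrict_le_self).trans hgA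
  calc eLpNorm (f - g) P volume
      = eLpNorm (S.indicator (f - g) + Sᶜ.indicator (f - g)) P volume := by
        rw [Set.indicator_self_add_compl]
    _ ≤ eLpNorm (S.indicator (f - g)) P volume + eLpNorm (Sᶜ.indicator (f - g)) P volume :=
        eLpNorm_add_le ((hf.sub hg).indicator hS).aestronglyMeasurable
          ((hf.sub hg).indicator hS.compl).aestronglyMeasurable hP1
    _ ≤ ((volume S ^ P.toReal⁻¹ * ENNReal.ofReal C + ε) + ε) + (ε + ε) := by
        rw [eLpNorm_indicator_eq_eLpNorm_restrict hS,
          eLpNorm_indicator_eq_eLpNorm_restrict hS.compl]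
        exact add_le_add hin hout
    _ = _ := by ring

universe u in
/-- A set is totally bounded as soon as, for every `ε`, its points are determined up to `ε` by
finitely many uniformly bounded real parameters, each known up to some error `t > 0`. -/
theorem totallyBounded_of_map {X : Type u} [PseudoMetricSpace X] {F : Set X}
    (H : ∀ ε > 0, ∃ (ι : Type u) (_ : Fintype ι) (v : X → ι → ℝ) (M t : ℝ), 0 < t ∧
      (∀ f ∈ F, ∀ j, ‖v f j‖ ≤ M) ∧
      ∀ f ∈ F, ∀ g ∈ F, (∀ j, ‖v f j - v g j‖ ≤ t) → dist f g < ε) : TotallyBounded F := by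
  refine Metric.totallyBounded_of_finite_discretization fun ε hε => ?_
  obtain ⟨ι, _, v, M, t, ht, hM, hv⟩ := H ε hε
  have hK : TotallyBounded (closedBall (0 : ι → ℝ) (max M 0)) :=
    (isCompact_closedBall _ _).totallyBounded
  obtain ⟨s, hs, hKs⟩ := Metric.totallyBounded_iff.1 hK (t / 2) (half_pos ht)
  have hc : ∀ f : F, ∃ c : s, dist (v f) c < t / 2 := fun f => by
    have hmem : v f ∈ closedBall (0 : ι → ℝ) (max M 0) := by
      rw [mem_closedBall_zero_iff, pi_norm_le_iff_of_nonneg (le_max_right _ _)]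
      exact fun j => (hM f f.2 j).trans (le_max_left _ _)
    obtain ⟨c, hc, hfc⟩ := Set.mem_iUnion₂.1 (hKs hmem)
    exact ⟨⟨c, hc⟩, hfc⟩
  choose c hc using hc
  refine ⟨s, hs.fintype, c, fun f g hfg => hv f f.2 g g.2 fun j => ?_⟩
  have h1 := hc f
  have h2 := hc g
  rw [← hfg] at h2
  have h3 : dist (v f) (v g) < t := by
    have := dist_triangle_right (v f) (v g) (c f)
    linarith
  rw [← dist_eq_norm]
  exact (dist_le_pi_dist _ _ j).trans h3.le

/-- The sufficiency half of the criterion; the parameters fed to `totallyBounded_of_map` are the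
values of the ball averages at the points of a finite net of a large ball. -/
theorem totallyBounded_of_tight_of_equicontinuous [Fact (1 ≤ P)] (hP : P ≠ ∞)
    {F : Set (Lp ℝ P (volume : Measure E))} {M : ℝ} (hM : ∀ f ∈ F, ‖f‖ ≤ M)
    (htail : ∀ ε : ℝ≥0∞, 0 < ε → ∃ R : ℝ, ∀ f ∈ F,
      eLpNorm f P (volume.restrict {x : E | R < ‖x‖}) ≤ ε)
    (htrans : ∀ ε : ℝ≥0∞, 0 < ε → ∃ δ > (0 : ℝ), ∀ y : E, ‖y‖ < δ → ∀ f ∈ F,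
      eLpNorm (fun x => f (x + y) - f x) P volume ≤ ε) : TotallyBounded F := by
  have hP1 : 1 ≤ P := Fact.out
  refine totallyBounded_of_map fun ε hε => ?_
  have hε8 : (0 : ℝ) < ε / 8 := by positivity
  obtain ⟨R, hR⟩ := htail (ENNReal.ofReal (ε / 8)) (by simpa using hε)
  obtain ⟨δ, hδ, hδF⟩ := htrans (ENNReal.ofReal (ε / 8)) (by simpa using hε)
  set K : ℝ := (volume (closedBall (0 : E) R) ^ P.toReal⁻¹).toReal with hK
  have hKtop : volume (closedBall (0 : E) R) ^ P.toReal⁻¹ ≠ ∞ :=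
    ENNReal.rpow_ne_top_of_nonneg (by positivity) measure_closedBall_lt_top.ne
  have hK0 : 0 ≤ K := ENNReal.toReal_nonneg
  -- `t` bounds each of the three terms of `A f x - A g x` in the net argument; the factor `12`
  -- makes the resulting contribution `3 K t` less than `ε / 4`.
  set t : ℝ := ε / (12 * (K + 1)) with ht_def
  have ht : 0 < t := by positivity
  set c : ℝ := ((volume (ball (0 : E) δ))⁻¹ ^ (1 / P).toReal).toReal with hc
  have hc0 : 0 ≤ c := ENNReal.toReal_nonneg
  have hctop := ballConst_ne_top (E := E) (P := P) hδ
  -- Equicontinuity of the averages loses the constant `c`, hence the tolerance `t / (c + 1)`.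
  obtain ⟨η, hη, hηF⟩ := htrans (ENNReal.ofReal (t / (c + 1))) (by
    rw [ENNReal.ofReal_pos]; positivity)
  have hequi : ∀ f ∈ F, ∀ x z : E, ‖x - z‖ < η →
      ‖ballAverage δ f x - ballAverage δ f z‖ ≤ t := fun f hf x z hxz => by
    have h := (enorm_ballAverage_sub_le hP1 hP hδ (Lp.memLp f) x z).trans
      (mul_le_mul_right (hηF _ hxz f hf) _)
    rw [← ENNReal.ofReal_toReal hctop, ← hc, ← ENNReal.ofReal_mul hc0, ← ofReal_norm,
      ENNReal.ofReal_le_ofReal_iff (by positivity)] at h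
    refine h.trans ?_
    rw [mul_div_assoc', div_le_iff₀ (by positivity)]
    nlinarith
  obtain ⟨s, -, hs, hcover⟩ := (isCompact_closedBall (0 : E) R).finite_cover_balls hη
  refine ⟨s, hs.fintype, fun f j => ballAverage δ f j, c * M, t, ht, fun f hf j => ?_,
    fun f hf g hg hfg => ?_⟩
  · have h := enorm_ballAverage_le hP1 hP hδ (Lp.memLp f) (j : E)
    rw [← ENNReal.ofReal_toReal hctop, ← hc, ← ENNReal.ofReal_toReal (Lp.eLpNorm_ne_top f),
      ← Lp.norm_def, ← ENNReal.ofReal_mul hc0, ← ofReal_norm,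
      ENNReal.ofReal_le_ofReal_iff (by positivity)] at h
    exact h.trans (by gcongr; exact hM f hf)
  · have hC : ∀ x ∈ closedBall (0 : E) R, ‖ballAverage δ f x - ballAverage δ g x‖ ≤ 3 * t := by
      intro x hx
      obtain ⟨z, hz, hxz⟩ := Set.mem_iUnion₂.1 (hcover hx)
      rw [mem_ball, dist_eq_norm] at hxz
      have h1 := hequi f hf x z hxz
      have h2 := hequi g hg x z hxz
      have h3 := hfg ⟨z, hz⟩
      simp only [Real.norm_eq_abs, abs_le] at h1 h2 h3 ⊢
      constructor <;> linarith
    have hmain := eLpNorm_sub_le_of_ballAverage hP1 hδ (Lp.stronglyMeasurable f)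
      (Lp.stronglyMeasurable g) (hR f hf) (hR g hg)
      (eLpNorm_ballAverage_sub_le hP1 hP hδ (Lp.memLp f) (Lp.stronglyMeasurable f)
        fun y hy => hδF y hy f hf)
      (eLpNorm_ballAverage_sub_le hP1 hP hδ (Lp.memLp g) (Lp.stronglyMeasurable g)
        fun y hy => hδF y hy g hg) hC
    have h4 : (4 : ℝ≥0∞) = ENNReal.ofReal 4 := by simp
    rw [← ENNReal.ofReal_toReal hKtop, ← hK, ← ENNReal.ofReal_mul hK0, h4,
      ← ENNReal.ofReal_mul (by norm_num), ← ENNReal.ofReal_add (by positivity) (by positivity),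
      ← Lp.edist_def, edist_dist, ENNReal.ofReal_le_ofReal_iff (by positivity)] at hmain
    refine hmain.trans_lt ?_
    have h5 : K * (3 * t) < ε / 4 := by
      have : (K + 1) * (3 * t) = ε / 4 := by rw [ht_def]; field_simp; norm_num
      nlinarith
    linarith

end Sufficiency

/-! ### Translation to integrals of `p`-th powers -/

theorem lintegral_ofReal_rpow_lt_iff {α : Type*} [MeasurableSpace α] {μ : Measure α} {p ε : ℝ}
    (hp : 1 ≤ p) (hε : 0 < ε) (g : α → ℝ) :
    (∫⁻ x, ENNReal.ofReal (|g x| ^ p) ∂μ) < ENNReal.ofReal (ε ^ p) ↔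
      eLpNorm g (ENNReal.ofReal p) μ < ENNReal.ofReal ε := by
  have hp0 : 0 < p := one_pos.trans_le hp
  have h := lintegral_enorm_rpow (μ := μ) (P := ENNReal.ofReal p) (by simpa using hp)
    ENNReal.ofReal_ne_top g
  rw [ENNReal.toReal_ofReal hp0.le] at h
  rw [← ENNReal.ofReal_rpow_of_pos hε, ← ENNReal.rpow_lt_rpow_iff hp0 (y := ENNReal.ofReal ε), ← h]
  simp_rw [← ENNReal.ofReal_rpow_of_nonneg (abs_nonneg _) hp0.le, ← Real.norm_eq_abs, ofReal_norm]

/-- Fréchet–Kolmogorov–Riesz, Hanche-Olsen–Holden Thm 5: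
`F ⊆ L^p(ℝ^n)` is totally bounded iff it is bounded, tight in space, and
uniformly translation-equicontinuous in `L^p`. -/
theorem Lp_totallyBounded_iff (n : ℕ) (hn : 1 ≤ n) (p : ℝ) (hp : 1 ≤ p)
    (F : Set (Lp ℝ (ENNReal.ofReal p) (volume : Measure (EuclideanSpace ℝ (Fin n))))) :
    haveI : Fact ((1 : ℝ≥0∞) ≤ ENNReal.ofReal p) :=
      ⟨by rw [← ENNReal.ofReal_one]; exact ENNReal.ofReal_le_ofReal hp⟩
    (TotallyBounded F ↔
      ((∃ M : ℝ, ∀ f ∈ F, ‖f‖ ≤ M) ∧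
       (∀ ε > (0:ℝ), ∃ R > (0:ℝ), ∀ f ∈ F,
          (∫⁻ x in {x : EuclideanSpace ℝ (Fin n) | R < ‖x‖},
              ENNReal.ofReal (|f x| ^ p) ∂volume) < ENNReal.ofReal (ε ^ p)) ∧
       (∀ ε > (0:ℝ), ∃ δ > (0:ℝ), ∀ y : EuclideanSpace ℝ (Fin n), ‖y‖ < δ → ∀ f ∈ F,
          (∫⁻ x, ENNReal.ofReal (|f (x + y) - f x| ^ p) ∂volume)
            < ENNReal.ofReal (ε ^ p)))) := by
  have : Fact ((1 : ℝ≥0∞) ≤ ENNReal.ofReal p) :=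
    ⟨by rw [← ENNReal.ofReal_one]; exact ENNReal.ofReal_le_ofReal hp⟩
  have hP : ENNReal.ofReal p ≠ ∞ := ENNReal.ofReal_ne_top
  have key : ∀ ε : ℝ≥0∞, 0 < ε → ∃ r > (0 : ℝ), ENNReal.ofReal r ≤ ε := fun ε hε => by
    obtain ⟨r, hr, hrε⟩ := ENNReal.lt_iff_exists_nnreal_btwn.1 hε
    exact ⟨r, by exact_mod_cast hr, by simpa using hrε.le⟩
  constructor
  · intro hF
    refine ⟨hF.isBounded.exists_norm_le, fun ε hε => ?_, fun ε hε => ?_⟩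
    · obtain ⟨R, hR, hRF⟩ := ((eventually_gt_atTop (0 : ℝ)).and
        (tail_of_totallyBounded hP hF (ENNReal.ofReal_pos.2 hε))).exists
      exact ⟨R, hR, fun f hf => (lintegral_ofReal_rpow_lt_iff hp hε _).2 (hRF f hf)⟩
    · obtain ⟨δ, hδ, hδF⟩ := Metric.eventually_nhds_iff.1
        (translate_of_totallyBounded hP hF (ENNReal.ofReal_pos.2 hε))
      exact ⟨δ, hδ, fun y hy f hf => (lintegral_ofReal_rpow_lt_iff hp hε _).2
        (hδF (by simpa using hy) f hf)⟩
  · rintro ⟨⟨M, hM⟩, htail, htrans⟩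
    refine totallyBounded_of_tight_of_equicontinuous hP hM (fun ε hε => ?_) fun ε hε => ?_
    · obtain ⟨r, hr, hrε⟩ := key ε hε
      obtain ⟨R, -, hRF⟩ := htail r hr
      exact ⟨R, fun f hf => ((lintegral_ofReal_rpow_lt_iff hp hr _).1 (hRF f hf)).le.trans hrε⟩
    · obtain ⟨r, hr, hrε⟩ := key ε hε
      obtain ⟨δ, hδ, hδF⟩ := htrans r hr
      exact ⟨δ, hδ, fun y hy f hf =>
        ((lintegral_ofReal_rpow_lt_iff hp hr _).1 (hδF y hy f hf)).le.trans hrε⟩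
end
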